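/- For all real numbers L, L' with 0 ≤ L ≤ L' ≤ 2/π, there exists an infinite binary word w such that liminf_{n→∞} (d_n(w)/n!)^{1/n} = L and limsup_{n→∞} (d_n(w)/n!)^{1/n} = L'. -/

import Mathlib

open Filter

/-- `dCount w n` is the number of permutations `π` of `{1,…,n}` (modeled as `Fin n`,
zero-based) such that for every `1 ≤ i ≤ n-1`, `π(i) > π(i+1)` iff the `i`-th letter of the
infinite binary word `w` (1-indexed, `w 0` is irrelevant) equals `1` (i.e. `true`). -/
noncomputable def dCount (w : ℕ → Bool) (n : ℕ) : ℕ :=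
  Nat.card {π : Equiv.Perm (Fin n) //
    ∀ i : ℕ, ∀ h : i + 1 < n,
      (π ⟨i + 1, h⟩ < π ⟨i, Nat.lt_of_succ_lt h⟩ ↔ w (i + 1) = true)}

/-!
Replace a random permutation by independent uniform variables. Each further letter of the pattern
acts on the density of the last variable by integration over `[x, 1]` or over `[0, x]`, and these
two operators are adjoint to each other. They exchange `cos (π x / 2)` and `sin (π x / 2)` up to
the factor `2 / π`, so `m` alternating letters after the index `n` multiply the probability of the
pattern by at least `(2 / π) ^ m / (n + 2)`. Iterated integration of `1` over `[0, x]` gives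
`x ^ m / m!`, so `m` descents divide the probability by at least `m!`. Alternating letters thus
raise the `n`-th root of the probability towards `2 / π`, descents lower it towards `0`, and its
steps tend to zero. Steering it alternately towards `L` and `L'` produces the word.
-/

section Counting

open scoped Finset

/-- The permutation `π` has descent pattern `w`: it descends at the (zero-based) position `i`
exactly when the letter `w (i + 1)` is `true`. -/
def HasDescents (w : ℕ → Bool) {n : ℕ} (π : Equiv.Perm (Fin n)) : Prop :=
  ∀ i : ℕ, ∀ h : i + 1 < n, (π ⟨i + 1, h⟩ < π ⟨i, Nat.lt_of_succ_lt h⟩ ↔ w (i + 1) = true)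

open Classical in
/-- The number of permutations of size `n + 1` with descent pattern `w` and last value `j`; these
numbers satisfy a recursion in `n`, which `dCount` alone does not. -/
noncomputable def lastCount (w : ℕ → Bool) (n : ℕ) (j : Fin (n + 1)) : ℕ :=
  #{π : Equiv.Perm (Fin (n + 1)) | HasDescents w π ∧ π (Fin.last n) = j}

/-- The permutation obtained from `σ` by appending the value `j` at the end and shifting up the
values that are at least `j`. -/
def appendValue {n : ℕ} (j : Fin (n + 1)) (σ : Equiv.Perm (Fin n)) : Equiv.Perm (Fin (n + 1)) :=
  (finSuccEquiv' (Fin.last n)).trans ((Equiv.optionCongr σ).trans (finSuccEquiv' j).symm)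

variable {n : ℕ}

lemma dCount_congr {v w : ℕ → Bool} (h : ∀ i < n, v i = w i) : dCount v n = dCount w n := by
  unfold dCount
  simp +contextual only [h]

lemma appendValue_last (j : Fin (n + 1)) (σ : Equiv.Perm (Fin n)) :
    appendValue j σ (Fin.last n) = j := by
  simp [appendValue]

lemma appendValue_castSucc (j : Fin (n + 1)) (σ : Equiv.Perm (Fin n)) (i : Fin n) :
    appendValue j σ i.castSucc = j.succAbove (σ i) := by
  simp [appendValue, ← Fin.succAbove_last]

lemma appendValue_injective (j : Fin (n + 1)) : Function.Injective (appendValue j) := by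
  intro σ τ h
  ext i
  have hi := congrArg (fun π => π i.castSucc) h
  simp only [appendValue_castSucc] at hi
  rw [Fin.succAbove_right_injective hi]

lemma exists_appendValue_eq {j : Fin (n + 1)} {π : Equiv.Perm (Fin (n + 1))}
    (h : π (Fin.last n) = j) : ∃ σ, appendValue j σ = π := by
  have hne (i : Fin n) : ∃ k, j.succAbove k = π i.castSucc :=
    Fin.exists_succAbove_eq (h ▸ π.injective.ne (Fin.castSucc_lt_last i).ne)
  choose f hf using hne
  have hinj : Function.Injective f := fun a b hab =>
    Fin.castSucc_injective _ (π.injective (by rw [← hf a, ← hf b, hab]))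
  refine ⟨Equiv.ofBijective f (Finite.injective_iff_bijective.1 hinj), ?_⟩
  ext i
  induction i using Fin.lastCases with
  | last => rw [appendValue_last, h]
  | cast i => rw [appendValue_castSucc, Equiv.ofBijective_apply, hf]

lemma hasDescents_appendValue_iff (w : ℕ → Bool) (j : Fin (n + 2))
    (σ : Equiv.Perm (Fin (n + 1))) :
    HasDescents w (appendValue j σ) ↔
      HasDescents w σ ∧ (j ≤ (σ (Fin.last n)).castSucc ↔ w (n + 1) = true) := by
  have hlast : appendValue j σ (Fin.last (n + 1)) < appendValue j σ (Fin.last n).castSucc ↔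
      j ≤ (σ (Fin.last n)).castSucc := by
    rw [appendValue_last, appendValue_castSucc, Fin.lt_succAbove_iff_le_castSucc]
  have hinit (a b : Fin (n + 1)) :
      appendValue j σ a.castSucc < appendValue j σ b.castSucc ↔ σ a < σ b := by
    rw [appendValue_castSucc, appendValue_castSucc, Fin.succAbove_lt_succAbove_iff]
  constructor
  · intro H
    exact ⟨fun i h => (hinit ⟨i + 1, h⟩ ⟨i, by omega⟩).symm.trans (H i (by omega)),
      hlast.symm.trans (H n (by omega))⟩
  · rintro ⟨hσ, hj⟩ i h
    obtain hi | rfl : i + 1 < n + 1 ∨ i = n := by omega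
    · exact (hinit ⟨i + 1, hi⟩ ⟨i, by omega⟩).trans (hσ i hi)
    · exact hlast.trans hj

open Classical in
lemma card_hasDescents_last_mem (w : ℕ → Bool) (s : Finset (Fin (n + 1))) :
    #{π : Equiv.Perm (Fin (n + 1)) | HasDescents w π ∧ π (Fin.last n) ∈ s} =
      ∑ j ∈ s, lastCount w n j := by
  rw [Finset.card_eq_sum_card_fiberwise (f := fun π => π (Fin.last n)) (t := s)
    fun π hπ => (Finset.mem_filter.1 hπ).2.2]
  refine Finset.sum_congr rfl fun j hj => ?_
  rw [Finset.filter_filter, lastCount]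
  congr! 2 with π
  grind

lemma dCount_succ_eq_sum (w : ℕ → Bool) (n : ℕ) : dCount w (n + 1) = ∑ j, lastCount w n j := by
  classical
  rw [← card_hasDescents_last_mem w Finset.univ, dCount, Nat.card_eq_fintype_card,
    Fintype.card_subtype]
  simp only [HasDescents, Finset.mem_univ, and_true]

lemma lastCount_succ (w : ℕ → Bool) (j : Fin (n + 2)) :
    lastCount w (n + 1) j =
      ∑ i : Fin (n + 1) with (j ≤ i.castSucc ↔ w (n + 1) = true), lastCount w n i := by
  classical
  rw [← card_hasDescents_last_mem]
  simp only [Finset.mem_filter, Finset.mem_univ, true_and, ← hasDescents_appendValue_iff]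
  refine (Finset.card_bij (fun σ _ => appendValue j σ) (fun σ hσ => ?_)
    (fun σ _ τ _ h => appendValue_injective j h) fun π hπ => ?_).symm
  · simpa [appendValue_last] using hσ
  · obtain ⟨hdesc, hlast⟩ := (Finset.mem_filter.1 hπ).2
    obtain ⟨σ, rfl⟩ := exists_appendValue_eq hlast
    exact ⟨σ, by simpa using hdesc, rfl⟩

lemma dCount_succ_le_dCount_succ_succ (w : ℕ → Bool) (n : ℕ) :
    dCount w (n + 1) ≤ dCount w (n + 2) := by
  -- Appending a largest or a smallest value extends every pattern by the letter `w (n + 1)`.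
  obtain ⟨j, hj⟩ : ∃ j : Fin (n + 2), ∀ i : Fin (n + 1),
      (j ≤ i.castSucc ↔ w (n + 1) = true) := by
    cases w (n + 1)
    · exact ⟨Fin.last _, fun i => by simp⟩
    · exact ⟨0, fun i => by simp⟩
  calc dCount w (n + 1) = lastCount w (n + 1) j := by
        rw [dCount_succ_eq_sum, lastCount_succ, Finset.filter_true_of_mem fun i _ => hj i]
    _ ≤ ∑ i, lastCount w (n + 1) i :=
        Finset.single_le_sum (fun _ _ => Nat.zero_le _) (Finset.mem_univ j)
    _ = dCount w (n + 2) := (dCount_succ_eq_sum w (n + 1)).symm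

lemma dCount_one (w : ℕ → Bool) : dCount w 1 = 1 := by
  rw [dCount, Nat.card_eq_one_iff_unique]
  exact ⟨inferInstance, ⟨1, fun i h => by omega⟩⟩

end Counting

section LetterIntegral

open intervalIntegral

/-- The operator on densities corresponding to one letter `b`: if `f` is the density of a variable
on `[0, 1]` (restricted to some event), then `letterIntegral b f` is the density of an independent
uniform variable on the event that it lies below (`b = true`) or above (`b = false`) the first. -/
noncomputable def letterIntegral (b : Bool) (f : ℝ → ℝ) (x : ℝ) : ℝ :=
  if b = true then ∫ t in x..1, f t else ∫ t in (0 : ℝ)..x, f t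

lemma letterIntegral_true (f : ℝ → ℝ) (x : ℝ) : letterIntegral true f x = ∫ t in x..1, f t :=
  if_pos rfl

lemma letterIntegral_false (f : ℝ → ℝ) (x : ℝ) :
    letterIntegral false f x = ∫ t in (0 : ℝ)..x, f t :=
  if_neg Bool.false_ne_true

lemma letterIntegral_sum {ι : Type*} (b : Bool) (s : Finset ι) (c : ι → ℝ) {f : ι → ℝ → ℝ}
    (hf : ∀ i ∈ s, Continuous (f i)) (x : ℝ) :
    letterIntegral b (fun t => ∑ i ∈ s, c i * f i t) x =
      ∑ i ∈ s, c i * letterIntegral b (f i) x := by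
  have key (l u : ℝ) :
      ∫ t in l..u, ∑ i ∈ s, c i * f i t = ∑ i ∈ s, c i * ∫ t in l..u, f i t := by
    rw [integral_finsetSum fun i hi => ((hf i hi).const_mul _).intervalIntegrable _ _]
    simp only [integral_const_mul]
  cases b
  · simp only [letterIntegral_false, key]
  · simp only [letterIntegral_true, key]

lemma hasDerivAt_letterIntegral_true {f : ℝ → ℝ} (hf : Continuous f) (x : ℝ) :
    HasDerivAt (letterIntegral true f) (-f x) x := by
  rw [funext (letterIntegral_true f)]
  exact integral_hasDerivAt_left (hf.intervalIntegrable _ _)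
    (hf.stronglyMeasurableAtFilter _ _) hf.continuousAt

lemma hasDerivAt_letterIntegral_false {f : ℝ → ℝ} (hf : Continuous f) (x : ℝ) :
    HasDerivAt (letterIntegral false f) (f x) x := by
  rw [funext (letterIntegral_false f)]
  exact integral_hasDerivAt_right (hf.intervalIntegrable _ _)
    (hf.stronglyMeasurableAtFilter _ _) hf.continuousAt

lemma continuous_letterIntegral (b : Bool) {f : ℝ → ℝ} (hf : Continuous f) :
    Continuous (letterIntegral b f) := by
  cases b
  · exact continuous_iff_continuousAt.2 fun x => (hasDerivAt_letterIntegral_false hf x).continuousAt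
  · exact continuous_iff_continuousAt.2 fun x => (hasDerivAt_letterIntegral_true hf x).continuousAt

lemma integral_letterIntegral_true_mul {f g : ℝ → ℝ} (hf : Continuous f) (hg : Continuous g) :
    ∫ x in (0 : ℝ)..1, letterIntegral true f x * g x =
      ∫ x in (0 : ℝ)..1, f x * letterIntegral false g x := by
  rw [integral_mul_deriv_eq_deriv_mul (fun x _ => hasDerivAt_letterIntegral_true hf x)
    (fun x _ => hasDerivAt_letterIntegral_false hg x)
    (hf.neg.intervalIntegrable _ _) (hg.intervalIntegrable _ _)]
  simp [letterIntegral_true, letterIntegral_false]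

lemma integral_letterIntegral_mul (b : Bool) {f g : ℝ → ℝ} (hf : Continuous f)
    (hg : Continuous g) :
    ∫ x in (0 : ℝ)..1, letterIntegral b f x * g x =
      ∫ x in (0 : ℝ)..1, f x * letterIntegral (!b) g x := by
  cases b
  · simpa only [mul_comm, Bool.not_false] using (integral_letterIntegral_true_mul hg hf).symm
  · exact integral_letterIntegral_true_mul hf hg

lemma letterIntegral_one (b : Bool) (x : ℝ) :
    letterIntegral b (fun _ => 1) x = if b = true then 1 - x else x := by
  cases b <;> simp [letterIntegral]

lemma letterIntegral_false_pow_div_factorial (k : ℕ) (x : ℝ) :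
    letterIntegral false (fun t => t ^ k / (k.factorial : ℝ)) x =
      x ^ (k + 1) / ((k + 1).factorial : ℝ) := by
  rw [letterIntegral_false, integral_div, integral_pow, Nat.factorial_succ]
  push_cast
  field_simp
  simp

/-- The sine and cosine waves of period `4`, which the operators `letterIntegral` exchange up to the
factor `2 / π`; they are the test functions for alternating patterns. -/
noncomputable def quarterWave (b : Bool) (x : ℝ) : ℝ :=
  if b = true then Real.cos (Real.pi / 2 * x) else Real.sin (Real.pi / 2 * x)

lemma continuous_quarterWave (b : Bool) : Continuous (quarterWave b) := by
  unfold quarterWave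
  cases b <;> simp only [Bool.false_eq_true, if_true, if_false] <;> fun_prop

lemma letterIntegral_quarterWave_not (b : Bool) (x : ℝ) :
    letterIntegral b (quarterWave (!b)) x = 2 / Real.pi * quarterWave b x := by
  have hpi : Real.pi / 2 ≠ 0 := by positivity
  cases b <;>
    simp [letterIntegral, quarterWave, integral_comp_mul_left (fun t => Real.sin t) hpi,
      integral_comp_mul_left (fun t => Real.cos t) hpi]

lemma quarterWave_le_one (b : Bool) (x : ℝ) : quarterWave b x ≤ 1 := by
  cases b
  · exact Real.sin_le_one _
  · exact Real.cos_le_one _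

lemma letterIntegral_one_le_quarterWave (b : Bool) {x : ℝ} (hx : x ∈ Set.Icc (0 : ℝ) 1) :
    letterIntegral b (fun _ => 1) x ≤ quarterWave b x := by
  rw [letterIntegral_one]
  cases b
  · exact Real.le_sin_mul hx.1 hx.2
  · have h := Real.le_sin_mul (sub_nonneg.2 hx.2) (sub_le_self 1 hx.1)
    rwa [mul_sub, mul_one, Real.sin_pi_div_two_sub] at h

end LetterIntegral

section Bernstein

open Polynomial

lemma derivative_sum_bernsteinPolynomial (R : Type*) [CommRing R] (n i : ℕ) :
    derivative (∑ j ∈ Finset.range (i + 1), bernsteinPolynomial R (n + 1) j) =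
      -((n + 1 : ℕ) * bernsteinPolynomial R n i) := by
  induction i with
  | zero =>
    rw [zero_add, Finset.sum_range_one, bernsteinPolynomial.derivative_zero, Nat.add_sub_cancel]
    ring
  | succ i ih =>
    rw [Finset.sum_range_succ, derivative_add, ih, bernsteinPolynomial.derivative_succ,
      Nat.add_sub_cancel]
    ring

lemma integral_eval_bernsteinPolynomial (n i : ℕ) (a b : ℝ) :
    ∫ t in a..b, (bernsteinPolynomial ℝ n i).eval t =
      (∑ j ∈ Finset.range (i + 1), (bernsteinPolynomial ℝ (n + 1) j).eval a -
        ∑ j ∈ Finset.range (i + 1), (bernsteinPolynomial ℝ (n + 1) j).eval b) / (n + 1) := by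
  have hderiv (x : ℝ) : HasDerivAt
      (fun t => -(∑ j ∈ Finset.range (i + 1), bernsteinPolynomial ℝ (n + 1) j).eval t / (n + 1))
      ((bernsteinPolynomial ℝ n i).eval x) x := by
    refine (((Polynomial.hasDerivAt _ x).neg).div_const ((n : ℝ) + 1)).congr_deriv ?_
    rw [derivative_sum_bernsteinPolynomial]
    simp only [eval_neg, eval_mul, eval_natCast]
    push_cast
    field_simp
  rw [intervalIntegral.integral_eq_sub_of_hasDerivAt (fun x _ => hderiv x)
    ((Polynomial.continuous _).intervalIntegrable _ _), eval_finsetSum, eval_finsetSum]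
  ring

lemma sum_eval_zero_bernsteinPolynomial (n i : ℕ) :
    ∑ j ∈ Finset.range (i + 1), (bernsteinPolynomial ℝ n j).eval 0 = 1 := by
  simp [bernsteinPolynomial.eval_at_0]

lemma sum_eval_one_bernsteinPolynomial {n i : ℕ} (h : i < n) :
    ∑ j ∈ Finset.range (i + 1), (bernsteinPolynomial ℝ n j).eval 1 = 0 :=
  Finset.sum_eq_zero fun j hj => by
    rw [bernsteinPolynomial.eval_at_1, if_neg (by grind)]

lemma letterIntegral_bernsteinPolynomial (b : Bool) {n : ℕ} (i : Fin (n + 1)) (x : ℝ) :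
    letterIntegral b (fun t => (bernsteinPolynomial ℝ n i).eval t) x =
      (∑ j : Fin (n + 2) with (j ≤ i.castSucc ↔ b = true),
        (bernsteinPolynomial ℝ (n + 1) j).eval x) / (n + 1) := by
  set B : ℕ → ℝ → ℝ := fun j t => (bernsteinPolynomial ℝ (n + 1) j).eval t
  have hle : ∑ j : Fin (n + 2) with j ≤ i.castSucc, B j x =
      ∑ j ∈ Finset.range (i + 1), B j x := by
    simp only [Finset.sum_filter, Fin.le_def, Fin.val_castSucc]
    rw [Fin.sum_univ_eq_sum_range (fun j => if j ≤ (i : ℕ) then B j x else 0),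
      ← Finset.sum_filter]
    congr 1
    grind
  have htotal : ∑ j : Fin (n + 2), B j x = 1 := by
    rw [Fin.sum_univ_eq_sum_range (fun j => B j x), ← eval_finsetSum, bernsteinPolynomial.sum,
      eval_one]
  cases b
  · rw [letterIntegral_false, integral_eval_bernsteinPolynomial,
      sum_eval_zero_bernsteinPolynomial, ← hle, ← htotal,
      ← Finset.sum_filter_add_sum_filter_not _ (fun j : Fin (n + 2) => j ≤ i.castSucc)]
    simp [B]
  · rw [letterIntegral_true, integral_eval_bernsteinPolynomial,
      sum_eval_one_bernsteinPolynomial i.is_lt, ← hle]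
    simp [B]

end Bernstein

section DescentProb

open scoped Nat

/-- The density of the last of `n + 1` independent uniform variables on `[0, 1]`, on the event that
their descent pattern is `w 1, …, w n`: given that the last variable has rank `j + 1`, its density
is `n + 1` times the `j`-th Bernstein polynomial of degree `n`. -/
noncomputable def lastDensity (w : ℕ → Bool) (n : ℕ) (x : ℝ) : ℝ :=
  ∑ j : Fin (n + 1), (lastCount w n j : ℝ) / n ! * (bernsteinPolynomial ℝ n j).eval x

/-- The probability that a uniformly random permutation of size `n + 1` has descent pattern
`w 1, …, w n`; the index `n` is the number of letters involved. -/
noncomputable def descentProb (w : ℕ → Bool) (n : ℕ) : ℝ :=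
  dCount w (n + 1) / (n + 1)!

variable {w : ℕ → Bool} {n : ℕ}

lemma continuous_lastDensity (w : ℕ → Bool) (n : ℕ) : Continuous (lastDensity w n) := by
  unfold lastDensity
  fun_prop

lemma lastDensity_nonneg (w : ℕ → Bool) (n : ℕ) {x : ℝ} (hx : x ∈ Set.Icc (0 : ℝ) 1) :
    0 ≤ lastDensity w n x :=
  Finset.sum_nonneg fun j _ =>
    mul_nonneg (by positivity) (bernstein_nonneg (ν := j) (x := ⟨x, hx⟩))

lemma lastDensity_succ (w : ℕ → Bool) (n : ℕ) :
    lastDensity w (n + 1) = letterIntegral (w (n + 1)) (lastDensity w n) := by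
  ext x
  unfold lastDensity
  rw [letterIntegral_sum _ _ _ fun j _ => Polynomial.continuous _]
  simp only [letterIntegral_bernsteinPolynomial, lastCount_succ, Finset.sum_filter, Nat.cast_sum,
    Finset.sum_div, Finset.sum_mul, Finset.mul_sum]
  rw [Finset.sum_comm]
  refine Finset.sum_congr rfl fun i _ => Finset.sum_congr rfl fun j _ => ?_
  rw [Nat.factorial_succ]
  split_ifs
  · push_cast
    field_simp
  · simp

lemma integral_lastDensity (w : ℕ → Bool) (n : ℕ) :
    ∫ x in (0 : ℝ)..1, lastDensity w n x = descentProb w n := by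
  have hint (j : Fin (n + 1)) :
      ∫ x in (0 : ℝ)..1, (bernsteinPolynomial ℝ n j).eval x = 1 / (n + 1) := by
    rw [integral_eval_bernsteinPolynomial, sum_eval_zero_bernsteinPolynomial,
      sum_eval_one_bernsteinPolynomial j.is_lt, sub_zero]
  unfold lastDensity
  rw [intervalIntegral.integral_finsetSum fun i _ =>
    ((Polynomial.continuous _).const_mul _).intervalIntegrable _ _]
  simp only [intervalIntegral.integral_const_mul, hint, ← Finset.sum_mul, ← Finset.sum_div]
  rw [descentProb, dCount_succ_eq_sum, Nat.factorial_succ]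
  push_cast
  field_simp

lemma integral_lastDensity_succ_mul (w : ℕ → Bool) (n : ℕ) {g : ℝ → ℝ} (hg : Continuous g) :
    ∫ x in (0 : ℝ)..1, lastDensity w (n + 1) x * g x =
      ∫ x in (0 : ℝ)..1, lastDensity w n x * letterIntegral (!w (n + 1)) g x := by
  rw [lastDensity_succ, integral_letterIntegral_mul _ (continuous_lastDensity w n) hg]

lemma integral_lastDensity_mul_le (w : ℕ → Bool) (n : ℕ) {g h : ℝ → ℝ} (hg : Continuous g)
    (hh : Continuous h) (hgh : ∀ x ∈ Set.Icc (0 : ℝ) 1, g x ≤ h x) :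
    ∫ x in (0 : ℝ)..1, lastDensity w n x * g x ≤ ∫ x in (0 : ℝ)..1, lastDensity w n x * h x :=
  intervalIntegral.integral_mono_on zero_le_one
    (((continuous_lastDensity w n).mul hg).intervalIntegrable _ _)
    (((continuous_lastDensity w n).mul hh).intervalIntegrable _ _)
    fun x hx => mul_le_mul_of_nonneg_left (hgh x hx) (lastDensity_nonneg w n hx)

lemma descentProb_succ_eq_integral (w : ℕ → Bool) (n : ℕ) : descentProb w (n + 1) =
    ∫ x in (0 : ℝ)..1, lastDensity w n x * letterIntegral (!w (n + 1)) (fun _ => 1) x := by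
  simp [← integral_lastDensity_succ_mul w n continuous_const, integral_lastDensity]

lemma descentProb_pos (w : ℕ → Bool) (n : ℕ) : 0 < descentProb w n := by
  have hcount : 1 ≤ dCount w (n + 1) := by
    induction n with
    | zero => exact (dCount_one w).ge
    | succ n ih => exact ih.trans (dCount_succ_le_dCount_succ_succ w n)
  unfold descentProb
  positivity

lemma descentProb_succ_le (w : ℕ → Bool) (n : ℕ) : descentProb w (n + 1) ≤ descentProb w n := by
  have hle : ∀ x ∈ Set.Icc (0 : ℝ) 1, letterIntegral (!w (n + 1)) (fun _ => 1) x ≤ 1 := by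
    intro x hx
    rw [letterIntegral_one]
    split_ifs
    · exact sub_le_self 1 hx.1
    · exact hx.2
  have h := integral_lastDensity_mul_le w n (continuous_letterIntegral _ continuous_const)
    continuous_const hle
  simpa only [← descentProb_succ_eq_integral, mul_one, integral_lastDensity] using h

lemma descentProb_le_one (w : ℕ → Bool) (n : ℕ) : descentProb w n ≤ 1 :=
  calc descentProb w n ≤ descentProb w 0 :=
        antitone_nat_of_succ_le (descentProb_succ_le w) (Nat.zero_le n)
    _ = 1 := by simp [descentProb, dCount_one]

lemma descentProb_le_mul_succ (w : ℕ → Bool) (n : ℕ) :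
    descentProb w n ≤ (n + 2) * descentProb w (n + 1) := by
  have h : (dCount w (n + 1) : ℝ) ≤ dCount w (n + 2) :=
    mod_cast dCount_succ_le_dCount_succ_succ w n
  calc descentProb w n ≤ dCount w (n + 2) / (n + 1)! := by unfold descentProb; gcongr
    _ = (n + 2) * descentProb w (n + 1) := by
        rw [descentProb, Nat.factorial_succ (n + 1)]
        push_cast
        field_simp
        ring

lemma descentProb_congr {v w : ℕ → Bool} (h : Set.EqOn v w (Set.Iic n)) :
    descentProb v n = descentProb w n := by
  rw [descentProb, descentProb, dCount_congr fun i hi => h (Nat.lt_succ_iff.1 hi)]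

lemma integral_lastDensity_add_mul_pow (hw : ∀ i > n, w i = true) (m k : ℕ) :
    ∫ x in (0 : ℝ)..1, lastDensity w (n + m) x * (x ^ k / k !) =
      ∫ x in (0 : ℝ)..1, lastDensity w n x * (x ^ (k + m) / (k + m)!) := by
  induction m generalizing k with
  | zero => rfl
  | succ m ih =>
    rw [← add_assoc, integral_lastDensity_succ_mul _ _ (by fun_prop), hw _ (by omega),
      Bool.not_true]
    simp only [letterIntegral_false_pow_div_factorial]
    rw [ih, add_right_comm, add_assoc]

lemma descentProb_add_le_div_factorial (hw : ∀ i > n, w i = true) (m : ℕ) :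
    descentProb w (n + m) ≤ descentProb w n / m ! := by
  have hpow : ∀ x ∈ Set.Icc (0 : ℝ) 1, x ^ m / m ! ≤ 1 / m ! := fun x hx => by
    gcongr
    exact pow_le_one₀ hx.1 hx.2
  calc descentProb w (n + m)
      = ∫ x in (0 : ℝ)..1, lastDensity w n x * (x ^ m / m !) := by
        simpa [integral_lastDensity] using integral_lastDensity_add_mul_pow hw m 0
    _ ≤ ∫ x in (0 : ℝ)..1, lastDensity w n x * (1 / m !) :=
        integral_lastDensity_mul_le w n (by fun_prop) continuous_const hpow
    _ = descentProb w n / m ! := by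
        rw [intervalIntegral.integral_mul_const, integral_lastDensity, mul_one_div]

lemma integral_lastDensity_add_mul_quarterWave (hw : ∀ i ≥ n, w (i + 1) = !w i) (m : ℕ) :
    ∫ x in (0 : ℝ)..1, lastDensity w (n + m) x * quarterWave (w (n + m)) x =
      (2 / Real.pi) ^ m * ∫ x in (0 : ℝ)..1, lastDensity w n x * quarterWave (w n) x := by
  induction m with
  | zero => simp
  | succ m ih =>
    rw [← add_assoc, integral_lastDensity_succ_mul _ _ (continuous_quarterWave _),
      hw (n + m) (by omega), Bool.not_not]
    simp only [letterIntegral_quarterWave_not, mul_left_comm _ (2 / Real.pi)]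
    rw [intervalIntegral.integral_const_mul, ih, pow_succ', mul_assoc]

lemma pow_mul_descentProb_le (hw : ∀ i ≥ n, w (i + 1) = !w i) (m : ℕ) :
    (2 / Real.pi) ^ m * descentProb w n ≤ (n + 2) * descentProb w (n + m) := by
  have hupper : ∫ x in (0 : ℝ)..1, lastDensity w (n + m) x * quarterWave (w (n + m)) x ≤
      descentProb w (n + m) := by
    simpa [integral_lastDensity] using integral_lastDensity_mul_le w (n + m)
      (continuous_quarterWave _) continuous_const fun x _ => quarterWave_le_one _ x
  have hlower : descentProb w (n + 1) ≤
      ∫ x in (0 : ℝ)..1, lastDensity w n x * quarterWave (w n) x := by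
    rw [descentProb_succ_eq_integral, hw n le_rfl, Bool.not_not]
    exact integral_lastDensity_mul_le w n (continuous_letterIntegral _ continuous_const)
      (continuous_quarterWave _) fun x hx => letterIntegral_one_le_quarterWave _ hx
  calc (2 / Real.pi) ^ m * descentProb w n
      ≤ (2 / Real.pi) ^ m * ((n + 2) * descentProb w (n + 1)) := by
        gcongr
        exact descentProb_le_mul_succ w n
    _ = (n + 2) * ((2 / Real.pi) ^ m * descentProb w (n + 1)) := mul_left_comm _ _ _
    _ ≤ (n + 2) * descentProb w (n + m) := by
        gcongr
        refine le_trans ?_ hupper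
        rw [integral_lastDensity_add_mul_quarterWave hw]
        gcongr

end DescentProb

section GrowthRate

open scoped Nat Topology

/-- The growth rate `(d / (n + 1)!) ^ (1 / (n + 1))` with `d = dCount w (n + 1)`; as in
`descentProb`, the index `n` is the number of letters involved. -/
noncomputable def growthRate (w : ℕ → Bool) (n : ℕ) : ℝ :=
  descentProb w n ^ (1 / ((n + 1 : ℕ) : ℝ))

/-- The error allowed when growth rates at indices from `n` on are compared with the one at `n`. It
absorbs a factor `n + 2` in `descentProb`, as `log (n + 2) ≤ 2 √(n + 1) = (n + 1) growthError n`. -/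
noncomputable def growthError (n : ℕ) : ℝ :=
  2 / √(n + 1)

variable {w : ℕ → Bool} {n : ℕ}

lemma growthError_pos (n : ℕ) : 0 < growthError n := by
  unfold growthError
  positivity

lemma antitone_growthError : Antitone growthError := fun m n h => by
  unfold growthError
  gcongr

lemma tendsto_growthError : Tendsto growthError atTop (𝓝 0) :=
  ((Real.tendsto_sqrt_atTop.comp
    (tendsto_natCast_atTop_atTop.atTop_add tendsto_const_nhds)).const_div_atTop 2)

lemma growthRate_pos (w : ℕ → Bool) (n : ℕ) : 0 < growthRate w n :=
  Real.rpow_pos_of_pos (descentProb_pos w n) _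

lemma growthRate_le_one (w : ℕ → Bool) (n : ℕ) : growthRate w n ≤ 1 :=
  Real.rpow_le_one (descentProb_pos w n).le (descentProb_le_one w n) (by positivity)

lemma growthRate_pow (w : ℕ → Bool) (n : ℕ) : growthRate w n ^ (n + 1) = descentProb w n := by
  rw [growthRate, one_div, Real.rpow_inv_natCast_pow (descentProb_pos w n).le n.succ_ne_zero]

lemma lt_growthRate_iff {t : ℝ} (ht : 0 ≤ t) :
    t < growthRate w n ↔ t ^ (n + 1) < descentProb w n := by
  rw [← growthRate_pow, pow_lt_pow_iff_left₀ ht (growthRate_pos w n).le n.succ_ne_zero]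

lemma growthRate_lt_iff {t : ℝ} (ht : 0 ≤ t) :
    growthRate w n < t ↔ descentProb w n < t ^ (n + 1) := by
  rw [← growthRate_pow, pow_lt_pow_iff_left₀ (growthRate_pos w n).le ht n.succ_ne_zero]

lemma growthRate_congr {v w : ℕ → Bool} (h : Set.EqOn v w (Set.Iic n)) :
    growthRate v n = growthRate w n := by
  rw [growthRate, growthRate, descentProb_congr h]

lemma le_add_of_le_mul_exp {y z δ : ℝ} (hz : z ≤ 1) (hδ : 0 ≤ δ) (h : z ≤ y * Real.exp δ) :
    z ≤ y + δ := by
  have hy : z * Real.exp (-δ) ≤ y := by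
    rwa [Real.exp_neg, ← div_eq_mul_inv, div_le_iff₀ (Real.exp_pos δ)]
  have hexp : Real.exp (-δ) ≤ 1 := Real.exp_le_one_iff.2 (neg_nonpos.2 hδ)
  calc z = z * Real.exp (-δ) + z * (1 - Real.exp (-δ)) := by ring
    _ ≤ y + 1 * (1 - Real.exp (-δ)) := by
        gcongr
    _ ≤ y + δ := by linarith [Real.one_sub_le_exp_neg δ]

lemma add_two_le_exp_growthError_pow (n : ℕ) :
    (n : ℝ) + 2 ≤ Real.exp (growthError n) ^ (n + 1) := by
  have hsq : √(n + 1 : ℝ) ^ 2 = n + 1 := Real.sq_sqrt (by positivity)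
  calc (n : ℝ) + 2 ≤ (√(n + 1) + 1) ^ 2 := by nlinarith [Real.sqrt_nonneg ((n : ℝ) + 1)]
    _ ≤ Real.exp √(n + 1) ^ 2 := by
        gcongr
        exact Real.add_one_le_exp _
    _ = Real.exp (growthError n) ^ (n + 1) := by
        rw [← Real.exp_nat_mul, ← Real.exp_nat_mul, growthError]
        push_cast
        congr 1
        field_simp
        exact hsq

lemma min_growthRate_le {c : ℝ} {m : ℕ} (hc : 0 ≤ c)
    (h : c ^ m * descentProb w n ≤ (n + 2) * descentProb w (n + m)) :
    min (growthRate w n) c ≤ growthRate w (n + m) + growthError n := by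
  have hmin : 0 ≤ min (growthRate w n) c := le_min (growthRate_pos w n).le hc
  have hexp : 1 ≤ Real.exp (growthError n) := Real.one_le_exp (growthError_pos n).le
  refine le_add_of_le_mul_exp ((min_le_left _ _).trans (growthRate_le_one w n))
    (growthError_pos n).le (le_of_pow_le_pow_left₀ (n + m).succ_ne_zero
      (by have := growthRate_pos w (n + m); positivity) ?_)
  calc min (growthRate w n) c ^ (n + m + 1)
      = min (growthRate w n) c ^ m * min (growthRate w n) c ^ (n + 1) := by ring
    _ ≤ c ^ m * growthRate w n ^ (n + 1) := by
        gcongr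
        exacts [min_le_right _ _, min_le_left _ _]
    _ ≤ (n + 2) * growthRate w (n + m) ^ (n + m + 1) := by simpa only [growthRate_pow] using h
    _ ≤ Real.exp (growthError n) ^ (n + m + 1) * growthRate w (n + m) ^ (n + m + 1) := by
        have := growthRate_pos w (n + m)
        gcongr
        exact (add_two_le_exp_growthError_pow n).trans (pow_le_pow_right₀ hexp (by omega))
    _ = (growthRate w (n + m) * Real.exp (growthError n)) ^ (n + m + 1) := by ring

lemma growthRate_add_le {m : ℕ} (h : descentProb w (n + m) ≤ descentProb w n / m !) :
    growthRate w (n + m) ≤ growthRate w n + growthError n := by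
  set s : ℝ := √(n + 1)
  have hs0 : 0 < s := Real.sqrt_pos.2 (by positivity)
  have hsq : s ^ 2 = n + 1 := Real.sq_sqrt (by positivity)
  set y := max (growthRate w n) (1 / s)
  have hy0 : 0 < y := (growthRate_pos w n).trans_le (le_max_left _ _)
  have hexp : Real.exp (1 / y) ≤ Real.exp (1 / s) ^ (n + m + 1) := by
    have hys : 1 / y ≤ s := (one_div_le hs0 hy0).1 (le_max_right _ _)
    have hns : s ≤ (n + m + 1 : ℕ) * (1 / s) := by
      rw [mul_one_div, le_div_iff₀ hs0, ← sq, hsq]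
      push_cast
      linarith [(Nat.cast_nonneg m : (0 : ℝ) ≤ m)]
    rw [← Real.exp_nat_mul]
    exact Real.exp_le_exp.2 (hys.trans hns)
  have hle : growthRate w (n + m) ≤ y * Real.exp (1 / s) := by
    refine le_of_pow_le_pow_left₀ (n + m).succ_ne_zero (by positivity) ?_
    calc growthRate w (n + m) ^ (n + m + 1)
        ≤ growthRate w n ^ (n + 1) / m ! := by simpa only [growthRate_pow] using h
      _ ≤ y ^ (n + 1) / m ! := by
          have := growthRate_pos w n
          gcongr
          exact le_max_left _ _
      _ = y ^ (n + m + 1) * ((1 / y) ^ m / m !) := by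
          rw [one_div, inv_pow]
          field_simp
          ring
      _ ≤ y ^ (n + m + 1) * Real.exp (1 / s) ^ (n + m + 1) := by
          gcongr
          exact (Real.pow_div_factorial_le_exp _ (by positivity) m).trans hexp
      _ = (y * Real.exp (1 / s)) ^ (n + m + 1) := (mul_pow _ _ _).symm
  calc growthRate w (n + m) ≤ y + 1 / s :=
        le_add_of_le_mul_exp (growthRate_le_one w _) (by positivity) hle
    _ ≤ growthRate w n + 1 / s + 1 / s := by
        gcongr
        exact max_le_add_of_nonneg (growthRate_pos w n).le (by positivity)
    _ = growthRate w n + growthError n := by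
        rw [growthError]
        ring

lemma abs_growthRate_succ_sub_le (w : ℕ → Bool) (n : ℕ) :
    |growthRate w (n + 1) - growthRate w n| ≤ growthError n := by
  have hupper := growthRate_add_le (w := w) (n := n) (m := 1)
    (by simpa using descentProb_succ_le w n)
  have hlower := min_growthRate_le (w := w) (n := n) (m := 1) zero_le_one
    (by simpa using descentProb_le_mul_succ w n)
  rw [min_eq_left (growthRate_le_one w n)] at hlower
  exact abs_sub_le_iff.2 ⟨by linarith, by linarith⟩

lemma eventually_lt_growthRate {c t : ℝ} (ht : t < c)
    (h : ∀ m, c ^ m * descentProb w n ≤ (n + 2) * descentProb w (n + m)) :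
    ∀ᶠ m in atTop, t < growthRate w (n + m) := by
  obtain ht0 | ht0 := lt_or_ge t 0
  · exact Eventually.of_forall fun m => ht0.trans (growthRate_pos w _)
  have hc : 0 < c := ht0.trans_lt ht
  have hlim : Tendsto (fun m : ℕ => (n + 2) * t ^ (n + 1) * (t / c) ^ m) atTop (𝓝 0) := by
    simpa using (tendsto_pow_atTop_nhds_zero_of_lt_one (div_nonneg ht0 hc.le)
      ((div_lt_one hc).2 ht)).const_mul ((n + 2) * t ^ (n + 1))
  filter_upwards [hlim.eventually_lt_const (descentProb_pos w n)] with m hm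
  rw [lt_growthRate_iff ht0]
  refine lt_of_mul_lt_mul_left ?_ (by positivity : (0 : ℝ) ≤ n + 2)
  calc (n + 2) * t ^ (n + m + 1)
      = c ^ m * ((n + 2) * t ^ (n + 1) * (t / c) ^ m) := by
        rw [div_pow]
        field_simp
        ring
    _ < c ^ m * descentProb w n := by gcongr
    _ ≤ (n + 2) * descentProb w (n + m) := h m

lemma eventually_growthRate_lt {t : ℝ} (ht : 0 < t)
    (h : ∀ m, descentProb w (n + m) ≤ descentProb w n / m !) :
    ∀ᶠ m in atTop, growthRate w (n + m) < t := by
  filter_upwards [(FloorSemiring.tendsto_pow_div_factorial_atTop t⁻¹).eventually_lt_const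
    (pow_pos ht (n + 1))] with m hm
  rw [growthRate_lt_iff ht.le]
  calc descentProb w (n + m) ≤ descentProb w n / m ! := h m
    _ ≤ 1 / m ! := by
        gcongr
        exact descentProb_le_one w n
    _ = t ^ m * (t⁻¹ ^ m / m !) := by
        rw [inv_pow]
        field_simp
    _ < t ^ m * t ^ (n + 1) := by gcongr
    _ = t ^ (n + m + 1) := by ring

end GrowthRate

section LimInfSup

variable {ι : Type*} {f : Filter ι} {u : ι → ℝ} {L : ℝ}

lemma liminf_eq_of_eventually_of_frequently (hev : ∀ δ > 0, ∀ᶠ i in f, L - δ ≤ u i)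
    (hfreq : ∀ δ > 0, ∃ᶠ i in f, u i ≤ L + δ) : liminf u f = L := by
  have hcobdd : f.IsCoboundedUnder (· ≥ ·) u := .of_frequently_le (hfreq 1 one_pos)
  refine le_antisymm (le_of_forall_pos_le_add fun δ hδ => ?_) (le_of_forall_sub_le fun δ hδ => ?_)
  · exact liminf_le_of_frequently_le (hfreq δ hδ) (isBoundedUnder_of_eventually_ge (hev δ hδ))
  · exact le_liminf_of_le hcobdd (hev δ hδ)

lemma limsup_eq_of_eventually_of_frequently (hev : ∀ δ > 0, ∀ᶠ i in f, u i ≤ L + δ)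
    (hfreq : ∀ δ > 0, ∃ᶠ i in f, L - δ ≤ u i) : limsup u f = L := by
  have hcobdd : f.IsCoboundedUnder (· ≤ ·) u := .of_frequently_ge (hfreq 1 one_pos)
  refine le_antisymm (le_of_forall_pos_le_add fun δ hδ => ?_) (le_of_forall_sub_le fun δ hδ => ?_)
  · exact limsup_le_of_le hcobdd (hev δ hδ)
  · exact le_limsup_of_frequently_le (hfreq δ hδ) (isBoundedUnder_of_eventually_le (hev δ hδ))

end LimInfSup

section Steering

open scoped Topology

variable {α : Type*}

/-- A real quantity `a w n`, determined by the letters of `w` up to the index `n`, can be steered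
within `[lo, hi]` when it moves in small steps and the letters after the index `n` can be chosen so
as to raise it above every level below `hi`, or to lower it below every level above `lo`, without an
excursion of more than `ε n` in the other direction. -/
structure IsSteerable (a : (ℕ → α) → ℕ → ℝ) (ε : ℕ → ℝ) (lo hi : ℝ) : Prop where
  congr {v w : ℕ → α} {n : ℕ} : Set.EqOn v w (Set.Iic n) → a v n = a w n
  error_pos (n : ℕ) : 0 < ε n
  antitone_error : Antitone ε
  tendsto_error : Tendsto ε atTop (𝓝 0)
  abs_succ_sub_le (w : ℕ → α) (n : ℕ) : |a w (n + 1) - a w n| ≤ ε n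
  exists_raise (w : ℕ → α) (n : ℕ) : ∃ v, Set.EqOn v w (Set.Iic n) ∧
    (∀ m, min (a w n) hi ≤ a v (n + m) + ε n) ∧ ∀ t < hi, ∃ᶠ m in atTop, t < a v (n + m)
  exists_lower (w : ℕ → α) (n : ℕ) : ∃ v, Set.EqOn v w (Set.Iic n) ∧
    (∀ m, a v (n + m) ≤ max (a w n) lo + ε n) ∧ ∀ t > lo, ∃ᶠ m in atTop, a v (n + m) < t

lemma exists_eqOn_Iic_and_forall_succ_eq (f : α → α) (w : ℕ → α) (n : ℕ) :
    ∃ v, Set.EqOn v w (Set.Iic n) ∧ ∀ i ≥ n, v (i + 1) = f (v i) := by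
  refine ⟨fun i => f^[i - n] (w (min i n)), fun i hi => ?_, fun i hi => ?_⟩
  · have hin : i ≤ n := hi
    simp only [Nat.sub_eq_zero_of_le hin, min_eq_left hin, Function.iterate_zero_apply]
  · simp only [min_eq_right hi, min_eq_right (Nat.le_succ_of_le hi), Nat.sub_add_comm hi,
      Function.iterate_succ_apply']

lemma exists_forall_eqOn_Iic {u : ℕ → ℕ → α} {N : ℕ → ℕ} (hN : StrictMono N)
    (hu : ∀ k, Set.EqOn (u (k + 1)) (u k) (Set.Iic (N k))) :
    ∃ w, ∀ k, Set.EqOn w (u k) (Set.Iic (N k)) := by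
  have hmono {k l : ℕ} (hkl : k ≤ l) : Set.EqOn (u l) (u k) (Set.Iic (N k)) := by
    induction l, hkl using Nat.le_induction with
    | base => exact Set.eqOn_refl _ _
    | succ l hkl ih => exact ((hu l).mono (Set.Iic_subset_Iic.2 (hN.monotone hkl))).trans ih
  refine ⟨fun i => u i i, fun k i hi => ?_⟩
  obtain hik | hki := le_total i k
  · exact (hmono hik (hN.le_apply : i ≤ N i)).symm
  · exact hmono hki hi

lemma eventually_mem_Icc_of_forall_mem_Icc {u ε : ℕ → ℝ} {N : ℕ → ℕ} {L L' : ℝ}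
    (hN : StrictMono N) (hε : Tendsto ε atTop (𝓝 0))
    (hu : ∀ k, ∀ m ∈ Set.Icc (N (k + 1)) (N (k + 2)), u m ∈ Set.Icc (L - ε k) (L' + ε k)) :
    ∀ δ > 0, ∀ᶠ m in atTop, u m ∈ Set.Icc (L - δ) (L' + δ) := by
  intro δ hδ
  obtain ⟨K, hK⟩ := eventually_atTop.1 (hε.eventually_lt_const hδ)
  filter_upwards [eventually_gt_atTop (N (K + 1))] with m hm
  have hshift : StrictMono fun k => N (K + k + 1) := fun i j hij => hN (by omega)
  obtain ⟨k, hkm, hmk⟩ := hshift.exists_between_of_tendsto_atTop hshift.tendsto_atTop hm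
  have hk := (hK (K + k) (Nat.le_add_right K k)).le
  exact Set.Icc_subset_Icc (by linarith) (by linarith) (hu (K + k) m ⟨hkm.le, hmk⟩)

namespace IsSteerable

variable {a : (ℕ → α) → ℕ → ℝ} {ε : ℕ → ℝ} {lo hi : ℝ}

lemma neg (h : IsSteerable a ε lo hi) : IsSteerable (fun w n => -a w n) ε (-hi) (-lo) where
  congr hvw := congrArg Neg.neg (h.congr hvw)
  error_pos := h.error_pos
  antitone_error := h.antitone_error
  tendsto_error := h.tendsto_error
  abs_succ_sub_le w n := by
    rw [neg_sub_neg, abs_sub_comm]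
    exact h.abs_succ_sub_le w n
  exists_raise w n := by
    obtain ⟨v, hvw, hbound, hreach⟩ := h.exists_lower w n
    refine ⟨v, hvw, fun m => ?_, fun t ht => (hreach (-t) (lt_neg.1 ht)).mono fun m => lt_neg.1⟩
    rw [min_neg_neg]
    linarith [hbound m]
  exists_lower w n := by
    obtain ⟨v, hvw, hbound, hreach⟩ := h.exists_raise w n
    refine ⟨v, hvw, fun m => ?_, fun t ht => (hreach (-t) (neg_lt.1 ht)).mono fun m => neg_lt.1⟩
    rw [max_neg_neg]
    linarith [hbound m]

lemma exists_approach_of_le (h : IsSteerable a ε lo hi) {w : ℕ → α} {n : ℕ} {t : ℝ} (ht : t ≤ hi)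
    (hle : a w n ≤ t) :
    ∃ v, ∃ n' > n, Set.EqOn v w (Set.Iic n) ∧ |a v n' - t| ≤ ε n ∧
      ∀ m ∈ Set.Icc n n', a v m ∈ Set.Icc (a w n - ε n) (t + ε n) := by
  classical
  obtain ⟨v, hvw, hbound, hreach⟩ := h.exists_raise w n
  have hexists : ∃ m, t - ε n < a v (n + m + 1) := by
    obtain ⟨m, hm⟩ := ((hreach (t - ε n) (by linarith [h.error_pos n])).and_eventually
      (eventually_ge_atTop 1)).exists
    exact ⟨m - 1, by rw [add_assoc, Nat.sub_add_cancel hm.2]; exact hm.1⟩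
  set k := Nat.find hexists
  have hbelow : ∀ m ≤ k, a v (n + m) ≤ t := by
    rintro (_ | m) hm
    · exact (h.congr hvw).le.trans hle
    · rw [← add_assoc]
      linarith [not_lt.1 (Nat.find_min hexists hm), h.error_pos n]
  have hstep : a v (n + k + 1) ≤ t + ε n := by
    linarith [(abs_le.1 (h.abs_succ_sub_le v (n + k))).2, hbelow k le_rfl,
      h.antitone_error (Nat.le_add_right n k)]
  refine ⟨v, n + k + 1, by omega, hvw,
    abs_le.2 ⟨by linarith [Nat.find_spec hexists], by linarith⟩, fun m hm => ?_⟩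
  obtain ⟨j, rfl⟩ := Nat.exists_eq_add_of_le hm.1
  refine ⟨by linarith [hbound j, min_eq_left (hle.trans ht)], ?_⟩
  obtain hj | rfl : j ≤ k ∨ j = k + 1 := by grind
  · linarith [hbelow j hj, h.error_pos n]
  · exact hstep

lemma exists_approach (h : IsSteerable a ε lo hi) (w : ℕ → α) (n : ℕ) {t : ℝ}
    (ht : t ∈ Set.Icc lo hi) :
    ∃ v, ∃ n' > n, Set.EqOn v w (Set.Iic n) ∧ |a v n' - t| ≤ ε n ∧
      ∀ m ∈ Set.Icc n n', a v m ∈ Set.Icc (min (a w n) t - ε n) (max (a w n) t + ε n) := by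
  obtain hle | hle := le_total (a w n) t
  · rw [min_eq_left hle, max_eq_right hle]
    exact h.exists_approach_of_le ht.2 hle
  · rw [min_eq_right hle, max_eq_left hle]
    obtain ⟨v, n', hn, hvw, htarget, hbounds⟩ :=
      h.neg.exists_approach_of_le (neg_le_neg ht.1) (neg_le_neg hle)
    refine ⟨v, n', hn, hvw, by rwa [neg_sub_neg, abs_sub_comm] at htarget, fun m hm => ?_⟩
    obtain ⟨hlower, hupper⟩ := hbounds m hm
    exact ⟨by linarith, by linarith⟩

lemma exists_tracking [Nonempty α] (h : IsSteerable a ε lo hi) {L L' : ℝ} {t : ℕ → ℝ}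
    (hlo : lo ≤ L) (hhi : L' ≤ hi) (ht : ∀ k, t k ∈ Set.Icc L L') :
    ∃ w, ∃ N : ℕ → ℕ, StrictMono N ∧ ∀ k, |a w (N (k + 1)) - t k| ≤ ε k ∧
      ∀ m ∈ Set.Icc (N (k + 1)) (N (k + 2)), a w m ∈ Set.Icc (L - 2 * ε k) (L' + 2 * ε k) := by
  obtain ⟨x⟩ := ‹Nonempty α›
  choose v n' hlt heq htarget hbounds using
    fun w n k => h.exists_approach w n (Set.Icc_subset_Icc hlo hhi (ht k))
  let s : ℕ → (ℕ → α) × ℕ := Nat.rec (fun _ => x, 0) fun k s => (v s.1 s.2 k, n' s.1 s.2 k)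
  let N k := (s k).2
  have hN : StrictMono N := strictMono_nat_of_lt_succ fun k => hlt _ _ k
  obtain ⟨w, hw⟩ := exists_forall_eqOn_Iic (u := fun k => (s k).1) hN fun k => heq (s k).1 (s k).2 k
  have hagree {k m : ℕ} (hm : m ≤ N k) : a w m = a (s k).1 m :=
    h.congr ((hw k).mono (Set.Iic_subset_Iic.2 hm))
  have herror (k : ℕ) : ε (N k) ≤ ε k := h.antitone_error hN.le_apply
  have hclose (k : ℕ) : |a w (N (k + 1)) - t k| ≤ ε k := by
    rw [hagree (k := k + 1) le_rfl]
    exact (htarget _ _ k).trans (herror k)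
  refine ⟨w, N, hN, fun k => ⟨hclose k, fun m hm => ?_⟩⟩
  obtain ⟨hlower, hupper⟩ := hbounds (s (k + 1)).1 (N (k + 1)) (k + 1) m hm
  have herr : ε (N (k + 1)) ≤ ε k := (herror (k + 1)).trans (h.antitone_error (Nat.le_succ k))
  have hnear : a w (N (k + 1)) ∈ Set.Icc (L - ε k) (L' + ε k) := by
    obtain ⟨hleft, hright⟩ := abs_le.1 (hclose k)
    exact ⟨by linarith [(ht k).1], by linarith [(ht k).2]⟩
  rw [← hagree (k := k + 1) le_rfl] at hlower hupper
  rw [hagree (k := k + 2) hm.2]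
  have hmin : L - ε k ≤ min (a w (N (k + 1))) (t (k + 1)) :=
    le_min hnear.1 (by linarith [(ht (k + 1)).1, h.error_pos k])
  have hmax : max (a w (N (k + 1))) (t (k + 1)) ≤ L' + ε k :=
    max_le hnear.2 (by linarith [(ht (k + 1)).2, h.error_pos k])
  exact ⟨by linarith, by linarith⟩

theorem exists_liminf_eq_limsup_eq [Nonempty α] (h : IsSteerable a ε lo hi) {L L' : ℝ}
    (hlo : lo ≤ L) (hLL' : L ≤ L') (hhi : L' ≤ hi) :
    ∃ w, liminf (a w) atTop = L ∧ limsup (a w) atTop = L' := by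
  have ht : ∀ k : ℕ, (if Even k then L else L') ∈ Set.Icc L L' := by
    intro k
    split_ifs
    exacts [Set.left_mem_Icc.2 hLL', Set.right_mem_Icc.2 hLL']
  obtain ⟨w, N, hN, hw⟩ := h.exists_tracking hlo hhi ht
  have herror : Tendsto (fun k => 2 * ε k) atTop (𝓝 0) := by
    simpa using h.tendsto_error.const_mul 2
  have hmem := eventually_mem_Icc_of_forall_mem_Icc hN herror fun k => (hw k).2
  have hfreq {p : ℕ → Prop} {s : ℝ} (hp : ∃ᶠ k in atTop, p k)
      (hs : ∀ k, p k → (if Even k then L else L') = s) :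
      ∀ δ > 0, ∃ᶠ m in atTop, |a w m - s| ≤ δ := by
    intro δ hδ
    refine (hN.tendsto_atTop.comp (tendsto_add_atTop_nat 1)).frequently
      ((hp.and_eventually (herror.eventually_lt_const hδ)).mono fun k ⟨hk, hkδ⟩ => ?_)
    rw [← hs k hk]
    exact (hw k).1.trans (by linarith [h.error_pos k, hkδ])
  have hL := hfreq Nat.frequently_even fun k hk => if_pos hk
  have hL' := hfreq Nat.frequently_odd fun k hk => if_neg (Nat.not_even_iff_odd.2 hk)
  refine ⟨w, liminf_eq_of_eventually_of_frequently
      (fun δ hδ => (hmem δ hδ).mono fun m hm => hm.1)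
      fun δ hδ => (hL δ hδ).mono fun m hm => by linarith [(abs_le.1 hm).2],
    limsup_eq_of_eventually_of_frequently
      (fun δ hδ => (hmem δ hδ).mono fun m hm => hm.2)
      fun δ hδ => (hL' δ hδ).mono fun m hm => by linarith [(abs_le.1 hm).1]⟩

end IsSteerable

end Steering

lemma isSteerable_growthRate : IsSteerable growthRate growthError 0 (2 / Real.pi) where
  congr h := growthRate_congr h
  error_pos := growthError_pos
  antitone_error := antitone_growthError
  tendsto_error := tendsto_growthError
  abs_succ_sub_le := abs_growthRate_succ_sub_le
  exists_raise w n := by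
    obtain ⟨v, hvw, hv⟩ := exists_eqOn_Iic_and_forall_succ_eq (!·) w n
    refine ⟨v, hvw, fun m => ?_,
      fun t ht => (eventually_lt_growthRate ht (pow_mul_descentProb_le hv)).frequently⟩
    rw [← growthRate_congr hvw]
    exact min_growthRate_le (by positivity) (pow_mul_descentProb_le hv m)
  exists_lower w n := by
    obtain ⟨v, hvw, hv⟩ : ∃ v, Set.EqOn v w (Set.Iic n) ∧ ∀ i > n, v i = true :=
      ⟨fun i => if i ≤ n then w i else true, fun i hi => if_pos hi, fun i hi => if_neg hi.not_ge⟩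
    refine ⟨v, hvw, fun m => ?_,
      fun t ht => (eventually_growthRate_lt ht (descentProb_add_le_div_factorial hv)).frequently⟩
    rw [max_eq_left (growthRate_pos w n).le, ← growthRate_congr hvw]
    exact growthRate_add_le (descentProb_add_le_div_factorial hv m)

theorem stmt1 (L L' : ℝ) (hL0 : 0 ≤ L) (hLL' : L ≤ L') (hL1 : L' ≤ 2 / Real.pi) :
    ∃ w : ℕ → Bool,
      liminf (fun n : ℕ => ((dCount w n : ℝ) / (Nat.factorial n : ℝ)) ^ (1 / (n : ℝ)))
        atTop = L ∧
      limsup (fun n : ℕ => ((dCount w n : ℝ) / (Nat.factorial n : ℝ)) ^ (1 / (n : ℝ)))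
        atTop = L' := by
  obtain ⟨w, hliminf, hlimsup⟩ :=
    isSteerable_growthRate.exists_liminf_eq_limsup_eq hL0 hLL' hL1
  exact ⟨w, (liminf_nat_add _ 1).symm.trans hliminf, (limsup_nat_add _ 1).symm.trans hlimsup⟩
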